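/- Let n ∈ ℕ and g ∈ G. Then the n-fold inf-convolution of ES^g with itself satisfies, for every X ∈ L^1, (□_{i=1}^n ES^g)(X) = ES^{ng}(X), where ng denotes the risk profile p ↦ n·g(p). -/

import Mathlib

open MeasureTheory Set Filter

variable {Ω : Type*} [MeasurableSpace Ω]

/-- An atomless probability space: every set of positive measure has a subset of
strictly smaller positive measure. -/
def Atomless (μ : Measure Ω) : Prop :=
  ∀ A : Set Ω, MeasurableSet A → 0 < μ A →
    ∃ B : Set Ω, MeasurableSet B ∧ B ⊆ A ∧ 0 < μ B ∧ μ B < μ A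

/-- Value at Risk at level `p`: the left `p`-quantile for `p ∈ (0,1]`, the essential
infimum for `p = 0`.  Values are extended reals. -/
noncomputable def VaR (μ : Measure Ω) (X : Ω → ℝ) (p : ℝ) : EReal :=
  if p = 0 then essInf (fun ω => (X ω : EReal)) μ
  else sInf ((fun x : ℝ => (x : EReal)) '' {x : ℝ | ENNReal.ofReal p ≤ μ {ω | X ω ≤ x}})

/-- Real-valued version of the left `p`-quantile, used as the integrand of ES. -/
noncomputable def VaRr (μ : Measure Ω) (X : Ω → ℝ) (p : ℝ) : ℝ :=
  sInf {x : ℝ | ENNReal.ofReal p ≤ μ {ω | X ω ≤ x}}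

/-- Expected Shortfall at level `p`: `(1/(1-p)) ∫_p^1 VaR_q(X) dq` for `p ∈ [0,1)`,
the essential supremum for `p = 1`. -/
noncomputable def ES (μ : Measure Ω) (X : Ω → ℝ) (p : ℝ) : EReal :=
  if p = 1 then essSup (fun ω => (X ω : EReal)) μ
  else (((1 - p)⁻¹ * ∫ q in Set.Ioo p 1, VaRr μ X q : ℝ) : EReal)

/-- The `g`-adjusted Expected Shortfall, `sup_{p ∈ [0,1]} (ES_p(X) - g(p))`.
Note that in `EReal` one has `⊤ - ⊤ = ⊥`, matching the convention `∞ - ∞ = -∞`. -/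
noncomputable def adjES (μ : Measure Ω) (g : ℝ → EReal) (X : Ω → ℝ) : EReal :=
  ⨆ p ∈ Set.Icc (0:ℝ) 1, (ES μ X p - g p)

/-- The class `𝒢` of risk profiles: increasing functions `[0,1] → (-∞,∞]` that are
not identically `∞`. -/
def IsRiskProfile (g : ℝ → EReal) : Prop :=
  MonotoneOn g (Set.Icc (0:ℝ) 1) ∧ (∀ p ∈ Set.Icc (0:ℝ) 1, g p ≠ ⊥) ∧
    ∃ p ∈ Set.Icc (0:ℝ) 1, g p ≠ ⊤

/-- Second-order stochastic dominance: `SSD μ X Y` means `X ≥_SSD Y`, i.e. every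
risk-averse agent prefers `X` to `Y` (positive values are losses). -/
def SSD (μ : Measure Ω) (X Y : Ω → ℝ) : Prop :=
  ∀ u : ℝ → ℝ, Monotone u → ConcaveOn ℝ Set.univ u →
    ∫ ω, u (-(Y ω)) ∂μ ≤ ∫ ω, u (-(X ω)) ∂μ

/-- The inf-convolution of the functionals `ρ_1, …, ρ_n`. -/
noncomputable def infConv (μ : Measure Ω) {n : ℕ} (ρ : Fin n → ((Ω → ℝ) → EReal))
    (X : Ω → ℝ) : EReal :=
  ⨅ (Y : Fin n → Ω → ℝ) (_ : (∀ i, Integrable (Y i) μ) ∧ ∀ ω, (∑ i, Y i ω) = X ω),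
    ∑ i, ρ i (Y i)

/-- The class `𝒢_VaR`: risk profiles finite on `[0,1)`, left-continuous on `[0,1]`
and right-continuous at `0`. -/
def GVaRProfile (g : ℝ → EReal) : Prop :=
  IsRiskProfile g ∧ (∀ p ∈ Set.Ico (0:ℝ) 1, g p ≠ ⊤) ∧
    (∀ p ∈ Set.Ioc (0:ℝ) 1, Filter.Tendsto g (nhdsWithin p (Set.Ico 0 p)) (nhds (g p))) ∧
    Filter.Tendsto g (nhdsWithin 0 (Set.Ioc 0 1)) (nhds (g 0))

/-- The class `𝒢_ES`: profiles in `𝒢_VaR` such that `h_g(p) = (1-p)g(p)` is concave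
on `(0,1)` and left-continuous at `1` (with `h_g(1) = 0` by the convention `0·∞ = 0`). -/
def GESProfile (g : ℝ → EReal) : Prop :=
  GVaRProfile g ∧ ConcaveOn ℝ (Set.Ioo (0:ℝ) 1) (fun p => (1 - p) * (g p).toReal) ∧
    Filter.Tendsto (fun p => (1 - p) * (g p).toReal) (nhdsWithin 1 (Set.Ico (0:ℝ) 1)) (nhds 0)

/-!
The theorem rests on `ES_p` being positively homogeneous and subadditive.
Subadditivity of `Y ↦ ES_p(Y)` at each fixed `p` gives
`ES_p(X) - n g(p) ≤ ∑ i, (ES_p(Y_i) - g(p))` for every allocation `∑ i, Y_i = X`, and positive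
homogeneity shows that the equal split `Y_i = X / n` attains the bound.

Subadditivity of `ES_p` for `0 < p < 1` comes from the Rockafellar–Uryasev formula
`(1 - p) ES_p(X) = min_t {(1 - p) t + E[(X - t)⁺]}`, whose minimum is attained at `t = VaR_p(X)`,
together with `(x + y - (s + t))⁺ ≤ (x - s)⁺ + (y - t)⁺`.
-/

open ProbabilityTheory

/-- Multiplication by a real `c > 0` as an order automorphism of `EReal`; it carries `c` through
the essential supremum in `ES μ X 1` and the supremum in `adjES`. -/
noncomputable def erealMulLeftOrderIso (c : ℝ) (hc : 0 < c) : EReal ≃o EReal :=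
  Equiv.toOrderIso
    { toFun := fun x => c * x
      invFun := fun x => (c⁻¹ : ℝ) * x
      left_inv := fun x => by
        dsimp only
        rw [← mul_assoc, ← EReal.coe_mul, inv_mul_cancel₀ hc.ne', EReal.coe_one, one_mul]
      right_inv := fun x => by
        dsimp only
        rw [← mul_assoc, ← EReal.coe_mul, mul_inv_cancel₀ hc.ne', EReal.coe_one, one_mul] }
    (fun _ _ h => mul_le_mul_of_nonneg_left h (EReal.coe_nonneg.2 hc.le))
    (fun _ _ h => mul_le_mul_of_nonneg_left h (EReal.coe_nonneg.2 (inv_nonneg.2 hc.le)))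

lemma ereal_coe_mul_sub {c : ℝ} (hc : 0 ≤ c) (x y : EReal) :
    (c : EReal) * (x - y) = c * x - c * y := by
  rw [sub_eq_add_neg, EReal.left_distrib_of_nonneg_of_ne_top (EReal.coe_nonneg.2 hc)
    (EReal.coe_ne_top c), mul_neg, ← sub_eq_add_neg]

section Homogeneity

variable (μ : Measure Ω) (X : Ω → ℝ) {c : ℝ}

lemma VaRr_smul (hc : 0 < c) (q : ℝ) : VaRr μ (c • X) q = c * VaRr μ X q := by
  rw [VaRr, VaRr, ← smul_eq_mul, ← Real.sInf_smul_of_nonneg hc.le]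
  congr 1
  ext x
  simp only [mem_smul_set_iff_inv_smul_mem₀ hc.ne', mem_ofPred_eq, Pi.smul_apply, smul_eq_mul,
    le_inv_mul_iff₀ hc]

lemma ES_smul (hc : 0 < c) (p : ℝ) : ES μ (c • X) p = c * ES μ X p := by
  by_cases hp : p = 1
  · rw [ES, ES, if_pos hp, if_pos hp]
    simp only [Pi.smul_apply, smul_eq_mul, EReal.coe_mul]
    exact ((erealMulLeftOrderIso c hc).essSup_apply (fun ω => (X ω : EReal)) μ).symm
  · rw [ES, ES, if_neg hp, if_neg hp]
    simp only [VaRr_smul μ X hc]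
    rw [integral_const_mul, mul_left_comm, EReal.coe_mul]

lemma adjES_smul (g : ℝ → EReal) (hc : 0 < c) :
    adjES μ (fun p => c * g p) (c • X) = c * adjES μ g X := by
  simp only [adjES, ES_smul μ X hc, ← ereal_coe_mul_sub hc.le]
  exact ((erealMulLeftOrderIso c hc).map_iSup₂ _).symm

end Homogeneity

lemma stieltjes_csInf_le_iff (F : StieltjesFunction ℝ) {q : ℝ}
    (hne : {x | q ≤ F x}.Nonempty) (hbdd : BddBelow {x | q ≤ F x}) (x : ℝ) :
    sInf {x | q ≤ F x} ≤ x ↔ q ≤ F x := by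
  refine ⟨fun h => ?_, fun h => csInf_le hbdd h⟩
  have hright : Tendsto F (nhdsWithin x (Ioi x)) (nhds (F x)) :=
    (F.right_continuous x).mono Ioi_subset_Ici_self
  refine ge_of_tendsto hright ?_
  filter_upwards [self_mem_nhdsWithin] with y hy
  obtain ⟨z, hz, hzy⟩ := exists_lt_of_csInf_lt hne (h.trans_lt hy)
  exact le_trans hz (F.mono hzy.le)

section Quantile

variable {μ : Measure Ω} [IsProbabilityMeasure μ] {X : Ω → ℝ}

lemma VaRr_eq_sInf_cdf (hX : AEMeasurable X μ) (q : ℝ) :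
    VaRr μ X q = sInf {x | q ≤ cdf (μ.map X) x} := by
  have : IsProbabilityMeasure (μ.map X) := Measure.isProbabilityMeasure_map hX
  have hcdf (x : ℝ) : μ {ω | X ω ≤ x} = ENNReal.ofReal (cdf (μ.map X) x) := by
    rw [ofReal_cdf, Measure.map_apply_of_aemeasurable hX measurableSet_Iic]
    rfl
  simp only [VaRr, hcdf, ENNReal.ofReal_le_ofReal_iff (cdf_nonneg _ _)]

lemma VaRr_le_iff (hX : AEMeasurable X μ) {q : ℝ} (hq : q ∈ Ioo (0 : ℝ) 1) (x : ℝ) :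
    VaRr μ X q ≤ x ↔ q ≤ cdf (μ.map X) x := by
  rw [VaRr_eq_sInf_cdf hX]
  refine stieltjes_csInf_le_iff _ ?_ ?_ x
  · obtain ⟨y, hy⟩ := ((tendsto_cdf_atTop (μ.map X)).eventually_const_lt hq.2).exists
    exact ⟨y, hy.le⟩
  · obtain ⟨y, hy⟩ := ((tendsto_cdf_atBot (μ.map X)).eventually_lt_const hq.1).exists
    exact ⟨y, fun z hz => ((monotone_cdf _).reflect_lt (hy.trans_le hz)).le⟩

lemma monotoneOn_VaRr (hX : AEMeasurable X μ) : MonotoneOn (VaRr μ X) (Ioo (0 : ℝ) 1) :=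
  fun _ ha _ hb hab => (VaRr_le_iff hX ha _).2 (hab.trans ((VaRr_le_iff hX hb _).1 le_rfl))

lemma aemeasurable_VaRr (hX : AEMeasurable X μ) :
    AEMeasurable (VaRr μ X) (volume.restrict (Ioo (0 : ℝ) 1)) :=
  aemeasurable_restrict_of_monotoneOn measurableSet_Ioo (monotoneOn_VaRr hX)

lemma map_VaRr (hX : AEMeasurable X μ) :
    (volume.restrict (Ioo (0 : ℝ) 1)).map (VaRr μ X) = μ.map X := by
  have : IsProbabilityMeasure (μ.map X) := Measure.isProbabilityMeasure_map hX
  refine Measure.ext_of_Iic _ _ fun x => ?_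
  have hpre : VaRr μ X ⁻¹' Iic x =ᵐ[volume.restrict (Ioo (0 : ℝ) 1)] Iic (cdf (μ.map X) x) := by
    filter_upwards [ae_restrict_mem measurableSet_Ioo] with q hq
    exact propext (VaRr_le_iff hX hq x)
  rw [Measure.map_apply_of_aemeasurable (aemeasurable_VaRr hX) measurableSet_Iic,
    measure_congr hpre, Measure.restrict_congr_set Ioo_ae_eq_Ioc,
    Measure.restrict_apply measurableSet_Iic, inter_comm, Ioc_inter_Iic,
    inf_eq_right.2 (cdf_le_one _ _), Real.volume_Ioc, sub_zero, ofReal_cdf]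

lemma identDistrib_VaRr (hX : AEMeasurable X μ) :
    IdentDistrib (VaRr μ X) X (volume.restrict (Ioo (0 : ℝ) 1)) μ where
  aemeasurable_fst := aemeasurable_VaRr hX
  aemeasurable_snd := hX
  map_eq := map_VaRr hX

lemma integrableOn_VaRr (hX : Integrable X μ) : IntegrableOn (VaRr μ X) (Ioo (0 : ℝ) 1) :=
  (identDistrib_VaRr hX.aemeasurable).integrable_iff.2 hX

lemma setIntegral_posPart_VaRr_sub (hX : AEMeasurable X μ) (t : ℝ) :
    ∫ q in Ioo (0 : ℝ) 1, (VaRr μ X q - t)⁺ = ∫ ω, (X ω - t)⁺ ∂μ :=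
  ((identDistrib_VaRr hX).comp (u := fun x => (x - t)⁺) (by fun_prop)).integral_eq

end Quantile

section RockafellarUryasev

variable {μ : Measure Ω} [IsProbabilityMeasure μ] {X : Ω → ℝ}

lemma setIntegral_VaRr_sub_const (hX : Integrable X μ) {p : ℝ} (hp : p ∈ Icc (0 : ℝ) 1) (t : ℝ) :
    ∫ q in Ioo p 1, (VaRr μ X q - t) = (∫ q in Ioo p 1, VaRr μ X q) - (1 - p) * t := by
  rw [integral_sub ((integrableOn_VaRr hX).mono_set (Ioo_subset_Ioo_left hp.1))
    (integrable_const t), setIntegral_const, Real.volume_real_Ioo_of_le hp.2, smul_eq_mul]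

lemma setIntegral_VaRr_sub_le (hX : Integrable X μ) {p : ℝ} (hp : 0 ≤ p) (t : ℝ) :
    ∫ q in Ioo p 1, (VaRr μ X q - t) ≤ ∫ ω, (X ω - t)⁺ ∂μ := by
  have hsub : Ioo p 1 ⊆ Ioo 0 1 := Ioo_subset_Ioo_left hp
  have hint : IntegrableOn (fun q => VaRr μ X q - t) (Ioo 0 1) :=
    (integrableOn_VaRr hX).sub (integrable_const t)
  have hint_pos : IntegrableOn (fun q => (VaRr μ X q - t)⁺) (Ioo 0 1) := hint.pos_part
  calc ∫ q in Ioo p 1, (VaRr μ X q - t)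
      ≤ ∫ q in Ioo p 1, (VaRr μ X q - t)⁺ :=
        integral_mono (hint.mono_set hsub) (hint_pos.mono_set hsub) fun _ => le_posPart _
    _ ≤ ∫ q in Ioo (0 : ℝ) 1, (VaRr μ X q - t)⁺ :=
        setIntegral_mono_set hint_pos (ae_of_all _ fun _ => posPart_nonneg _)
          hsub.eventuallyLE
    _ = ∫ ω, (X ω - t)⁺ ∂μ := setIntegral_posPart_VaRr_sub hX.aemeasurable t

lemma setIntegral_VaRr_sub_VaRr (hX : AEMeasurable X μ) {p : ℝ} (hp : p ∈ Ioo (0 : ℝ) 1) :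
    ∫ q in Ioo p 1, (VaRr μ X q - VaRr μ X p) = ∫ ω, (X ω - VaRr μ X p)⁺ ∂μ := by
  have hmono := monotoneOn_VaRr hX
  have hsub : Ioo p 1 ⊆ Ioo 0 1 := Ioo_subset_Ioo_left hp.1.le
  calc ∫ q in Ioo p 1, (VaRr μ X q - VaRr μ X p)
      = ∫ q in Ioo p 1, (VaRr μ X q - VaRr μ X p)⁺ :=
        setIntegral_congr_fun measurableSet_Ioo fun q hq =>
          (posPart_of_nonneg (sub_nonneg.2 (hmono hp (hsub hq) hq.1.le))).symm
    _ = ∫ q in Ioo (0 : ℝ) 1, (VaRr μ X q - VaRr μ X p)⁺ := by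
        refine (setIntegral_eq_of_subset_of_forall_sdiff_eq_zero measurableSet_Ioo hsub ?_).symm
        rintro q ⟨hq, hqp⟩
        have hle : q ≤ p := le_of_not_gt fun h => hqp ⟨h, hq.2⟩
        exact posPart_of_nonpos (sub_nonpos.2 (hmono hq hp hle))
    _ = ∫ ω, (X ω - VaRr μ X p)⁺ ∂μ := setIntegral_posPart_VaRr_sub hX _

end RockafellarUryasev

section Subadditivity

lemma essSup_coe_add_le (μ : Measure Ω) (X Y : Ω → ℝ) :
    essSup (fun ω => ((X + Y) ω : EReal)) μ
      ≤ essSup (fun ω => (X ω : EReal)) μ + essSup (fun ω => (Y ω : EReal)) μ := by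
  refine essSup_le_of_ae_le _ ?_
  filter_upwards [ae_le_essSup (f := fun ω => (X ω : EReal)) (μ := μ),
    ae_le_essSup (f := fun ω => (Y ω : EReal)) (μ := μ)] with ω hXω hYω
  rw [Pi.add_apply, EReal.coe_add]
  exact add_le_add hXω hYω

variable {μ : Measure Ω} [IsProbabilityMeasure μ] {X Y : Ω → ℝ}

lemma integral_posPart_add_sub_le (hX : Integrable X μ) (hY : Integrable Y μ) (s t : ℝ) :
    ∫ ω, ((X + Y) ω - (s + t))⁺ ∂μ ≤ ∫ ω, (X ω - s)⁺ ∂μ + ∫ ω, (Y ω - t)⁺ ∂μ := by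
  have hXs : Integrable (fun ω => (X ω - s)⁺) μ := (hX.sub (integrable_const s)).pos_part
  have hYt : Integrable (fun ω => (Y ω - t)⁺) μ := (hY.sub (integrable_const t)).pos_part
  rw [← integral_add hXs hYt]
  refine integral_mono ((hX.add hY).sub (integrable_const _)).pos_part (hXs.add hYt) fun ω => ?_
  change (X ω + Y ω - (s + t))⁺ ≤ (X ω - s)⁺ + (Y ω - t)⁺
  rw [add_sub_add_comm]
  exact sup_le (add_le_add (le_posPart _) (le_posPart _))
    (add_nonneg (posPart_nonneg _) (posPart_nonneg _))

lemma setIntegral_VaRr_add_le (hX : Integrable X μ) (hY : Integrable Y μ) {p : ℝ}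
    (hp : p ∈ Ico (0 : ℝ) 1) :
    ∫ q in Ioo p 1, VaRr μ (X + Y) q
      ≤ (∫ q in Ioo p 1, VaRr μ X q) + ∫ q in Ioo p 1, VaRr μ Y q := by
  rcases hp.1.eq_or_lt with rfl | hp0
  · rw [(identDistrib_VaRr (hX.add hY).aemeasurable).integral_eq,
      (identDistrib_VaRr hX.aemeasurable).integral_eq,
      (identDistrib_VaRr hY.aemeasurable).integral_eq]
    exact (integral_add hX hY).le
  · have hmem : p ∈ Ioo (0 : ℝ) 1 := ⟨hp0, hp.2⟩
    have hIcc : p ∈ Icc (0 : ℝ) 1 := Ico_subset_Icc_self hp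
    have h := (setIntegral_VaRr_sub_le (hX.add hY) hp.1 (VaRr μ X p + VaRr μ Y p)).trans
      (integral_posPart_add_sub_le hX hY _ _)
    rw [← setIntegral_VaRr_sub_VaRr hX.aemeasurable hmem,
      ← setIntegral_VaRr_sub_VaRr hY.aemeasurable hmem,
      setIntegral_VaRr_sub_const (hX.add hY) hIcc, setIntegral_VaRr_sub_const hX hIcc,
      setIntegral_VaRr_sub_const hY hIcc] at h
    linarith

lemma ES_add_le (hX : Integrable X μ) (hY : Integrable Y μ) {p : ℝ} (hp : p ∈ Icc (0 : ℝ) 1) :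
    ES μ (X + Y) p ≤ ES μ X p + ES μ Y p := by
  by_cases hp1 : p = 1
  · simpa only [ES, if_pos hp1] using essSup_coe_add_le μ X Y
  · have hlt : p < 1 := lt_of_le_of_ne hp.2 hp1
    simp only [ES, if_neg hp1]
    rw [← EReal.coe_add, EReal.coe_le_coe_iff, ← mul_add]
    exact mul_le_mul_of_nonneg_left (setIntegral_VaRr_add_le hX hY ⟨hp.1, hlt⟩)
      (inv_nonneg.2 (sub_nonneg.2 hp.2))

lemma ES_sum_le {ι : Type*} {s : Finset ι} (hs : s.Nonempty) {Y : ι → Ω → ℝ}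
    (hY : ∀ i ∈ s, Integrable (Y i) μ) {p : ℝ} (hp : p ∈ Icc (0 : ℝ) 1) :
    ES μ (∑ i ∈ s, Y i) p ≤ ∑ i ∈ s, ES μ (Y i) p :=
  Finset.le_sum_nonempty_of_subadditive_on_pred (fun Z => ES μ Z p) (fun Z => Integrable Z μ)
    (fun _ _ hZ hW => ES_add_le hZ hW hp) (fun _ _ hZ hW => hZ.add hW) Y s hs hY

lemma adjES_sum_le {ι : Type*} {s : Finset ι} (hs : s.Nonempty) {Y : ι → Ω → ℝ}
    (hY : ∀ i ∈ s, Integrable (Y i) μ) (g : ℝ → EReal) :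
    adjES μ (fun p => (s.card : EReal) * g p) (∑ i ∈ s, Y i) ≤ ∑ i ∈ s, adjES μ g (Y i) := by
  refine iSup₂_le fun p hp => ?_
  calc ES μ (∑ i ∈ s, Y i) p - s.card * g p
      ≤ ∑ i ∈ s, ES μ (Y i) p - s.card * g p := EReal.sub_le_sub (ES_sum_le hs hY hp) le_rfl
    _ = ∑ i ∈ s, (ES μ (Y i) p - g p) := by
        simp only [sub_eq_add_neg, Finset.sum_add_distrib, Finset.sum_const, EReal.nsmul_eq_mul,
          mul_neg]
    _ ≤ ∑ i ∈ s, adjES μ g (Y i) := Finset.sum_le_sum fun i _ =>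
        le_iSup₂ (f := fun p (_ : p ∈ Icc (0 : ℝ) 1) => ES μ (Y i) p - g p) p hp

end Subadditivity

theorem stmt7_general (μ : Measure Ω) [IsProbabilityMeasure μ] (n : ℕ) (hn : 0 < n)
    (g : ℝ → EReal) (X : Ω → ℝ) (hX : Integrable X μ) :
    infConv μ (fun _ : Fin n => adjES μ g) X = adjES μ (fun p => (n : EReal) * g p) X := by
  have hn' : (0 : ℝ) < n := Nat.cast_pos.2 hn
  have hsplit : (n : ℝ) • (n : ℝ)⁻¹ • X = X := smul_inv_smul₀ hn'.ne' X
  apply le_antisymm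
  · calc infConv μ (fun _ : Fin n => adjES μ g) X
        ≤ ∑ _i : Fin n, adjES μ g ((n : ℝ)⁻¹ • X) :=
          iInf₂_le (fun _ => (n : ℝ)⁻¹ • X) ⟨fun _ => hX.smul _, fun ω => by
            simpa using congrFun hsplit ω⟩
      _ = (n : ℝ) * adjES μ g ((n : ℝ)⁻¹ • X) := by
          rw [Finset.sum_const, Finset.card_fin, EReal.nsmul_eq_mul, EReal.coe_coe_eq_natCast]
      _ = adjES μ (fun p => n * g p) X := by
          rw [← adjES_smul μ _ g hn', hsplit, EReal.coe_coe_eq_natCast]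
  · refine le_iInf₂ fun Y ⟨hY, hsum⟩ => ?_
    obtain rfl : ∑ i, Y i = X := funext fun ω => by rw [Finset.sum_apply, hsum]
    have : NeZero n := ⟨hn.ne'⟩
    simpa only [Finset.card_fin] using
      adjES_sum_le Finset.univ_nonempty (fun i _ => hY i) g

/-- For `g ∈ 𝒢`, the `n`-fold inf-convolution of `ES^g` with itself
equals `ES^{ng}`. -/
theorem stmt7 (μ : Measure Ω) [IsProbabilityMeasure μ] (hatomless : Atomless μ)
    (n : ℕ) (hn : 0 < n) (g : ℝ → EReal) (hg : IsRiskProfile g)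
    (X : Ω → ℝ) (hX : Integrable X μ) :
    infConv μ (fun _ : Fin n => adjES μ g) X
      = adjES μ (fun p => (n : EReal) * g p) X :=
  stmt7_general μ n hn g X hX
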